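/- arXiv:1106.1425 — 5 statements merged into one kernel-verified Lean document; each statement's English description precedes it below -/
import Mathlib

section
/- Let p be a prime and f(x) = p^n + p^m γ₁ x + γ₂ x² + ⋯ + γ_d x^d a polynomial with integer coefficients, where d ≥ 2, γ_d ≠ 0, n ≥ 2, m ≥ 1, p does not divide γ₁, and p does not divide all of γ₂, …, γ_d. If n > 2m, then f has a root ϱ in the ring ℤ_p of p-adic integers; in particular, f is reducible in ℤ_p[x], i.e., f = g·h for polynomials g, h over ℤ_p neither of which is a unit of ℤ_p[x]. -/
/-- Let `f = p^n + p^m γ₁ x + γ₂ x² + ⋯ + γ_d x^d` with `d ≥ 2`, `γ_d ≠ 0`, `n ≥ 2`, `m ≥ 1`,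
`p ∤ γ₁`, and `p` not dividing all of `γ₂, …, γ_d`.  If `n > 2m`, then `f` has a root in `ℤ_p`;
in particular `f` is reducible in `ℤ_p[x]`. -/
theorem root_and_reducible_in_padic_of_n_gt_two_mul_m (p : ℕ) [hp : Fact p.Prime]
    (n m d : ℕ) (γ₁ : ℤ) (f : Polynomial ℤ) (hd : 2 ≤ d) (hdeg : f.natDegree = d)
    (hn : 2 ≤ n) (hm : 1 ≤ m)
    (h0 : f.coeff 0 = (p : ℤ) ^ n)
    (h1 : f.coeff 1 = (p : ℤ) ^ m * γ₁)
    (hγ₁ : ¬ (p : ℤ) ∣ γ₁)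
    (hhigh : ∃ i, 2 ≤ i ∧ i ≤ d ∧ ¬ (p : ℤ) ∣ f.coeff i)
    (hnm : 2 * m < n) :
    (∃ ϱ : ℤ_[p], Polynomial.aeval ϱ f = 0) ∧
      ∃ g h : Polynomial ℤ_[p],
        f.map (Int.castRingHom ℤ_[p]) = g * h ∧ ¬ IsUnit g ∧ ¬ IsUnit h := by
  have hγ : ‖((γ₁ : ℤ) : ℤ_[p])‖ = 1 := by
    have h2 := PadicInt.norm_le_one ((γ₁ : ℤ) : ℤ_[p])
    have h3 : ¬ ‖((γ₁ : ℤ) : ℤ_[p])‖ < 1 := by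
      rw [PadicInt.norm_int_lt_one_iff_dvd]
      exact hγ₁
    exact le_antisymm h2 (not_lt.mp h3)
  have e0 : Polynomial.aeval (0 : ℤ_[p]) f = (p : ℤ_[p]) ^ n := by
    rw [← Polynomial.coeff_zero_eq_aeval_zero', h0]
    simp
  have e1 : Polynomial.aeval (0 : ℤ_[p]) (Polynomial.derivative f) =
      (p : ℤ_[p]) ^ m * (γ₁ : ℤ_[p]) := by
    rw [← Polynomial.coeff_zero_eq_aeval_zero', Polynomial.coeff_derivative]
    simp [h1]
  have hp1 : (1 : ℝ) < p := by exact_mod_cast hp.out.one_lt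
  have hroot : ∃ ϱ : ℤ_[p], Polynomial.aeval ϱ f = 0 := by
    have hnorm : ‖Polynomial.aeval (0 : ℤ_[p]) f‖ <
        ‖Polynomial.aeval (0 : ℤ_[p]) (Polynomial.derivative f)‖ ^ 2 := by
      rw [e0, e1, norm_mul, hγ, mul_one, norm_pow, norm_pow, PadicInt.norm_p, ← pow_mul]
      exact pow_lt_pow_right_of_lt_one₀ (by positivity) (inv_lt_one_of_one_lt₀ hp1) (by omega)
    obtain ⟨z, hz, _⟩ := hensels_lemma hnorm
    exact ⟨z, hz⟩
  refine ⟨hroot, ?_⟩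
  obtain ⟨z, hz⟩ := hroot
  have hr : (f.map (Int.castRingHom ℤ_[p])).IsRoot z := by
    rw [Polynomial.IsRoot, Polynomial.eval_map]
    simpa [Polynomial.aeval_def] using hz
  obtain ⟨h, hh⟩ := Polynomial.dvd_iff_isRoot.mpr hr
  have hdm : (f.map (Int.castRingHom ℤ_[p])).natDegree = d := by
    rw [Polynomial.natDegree_map_eq_of_injective (RingHom.injective_int _), hdeg]
  refine ⟨_, h, hh, Polynomial.not_isUnit_X_sub_C z, fun hu => ?_⟩
  have hne : h ≠ 0 := hu.ne_zero
  rw [hh, Polynomial.natDegree_mul (Polynomial.X_sub_C_ne_zero z) hne,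
    Polynomial.natDegree_X_sub_C, Polynomial.natDegree_eq_zero_of_isUnit hu] at hdm
  omega
end

section
/- Let p be a prime and f(x) = p^n + p^m γ₁ x + γ₂ x² + ⋯ + γ_d x^d a polynomial with integer coefficients, where d ≥ 2, γ_d ≠ 0, n ≥ 2, m ≥ 1, either p does not divide γ₁ or γ₁ = 0, and p does not divide all of γ₂, …, γ_d. Assume n ≤ 2m. If ϱ ∈ ℤ_p is a root of f with v_p(ϱ) = ℓ ≥ 1, then 2ℓ ≤ n and ℓ ≤ m. -/
/-- Let `f = p^n + p^m γ₁ x + γ₂ x² + ⋯ + γ_d x^d` with `d ≥ 2`, `γ_d ≠ 0`, `n ≥ 2`, `m ≥ 1`,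
`p ∤ γ₁` or `γ₁ = 0`, `p` not dividing all of `γ₂, …, γ_d`, and `n ≤ 2m`.  If `ϱ ∈ ℤ_p` is a
root of `f` with `v_p(ϱ) = ℓ ≥ 1`, then `2ℓ ≤ n` and `ℓ ≤ m`. -/
theorem valuation_bounds_of_padic_root (p : ℕ) [hp : Fact p.Prime]
    (n m d : ℕ) (γ₁ : ℤ) (f : Polynomial ℤ) (hd : 2 ≤ d) (hdeg : f.natDegree = d)
    (hn : 2 ≤ n) (hm : 1 ≤ m)
    (h0 : f.coeff 0 = (p : ℤ) ^ n)
    (h1 : f.coeff 1 = (p : ℤ) ^ m * γ₁)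
    (hγ₁ : ¬ (p : ℤ) ∣ γ₁ ∨ γ₁ = 0)
    (hhigh : ∃ i, 2 ≤ i ∧ i ≤ d ∧ ¬ (p : ℤ) ∣ f.coeff i)
    (hnm : n ≤ 2 * m)
    (ϱ : ℤ_[p]) (hroot : Polynomial.aeval ϱ f = 0)
    (ℓ : ℕ) (hℓ : 1 ≤ ℓ) (hval : ϱ.valuation = (ℓ : ℤ)) :
    2 * ℓ ≤ n ∧ ℓ ≤ m := by
  have hv : ϱ.valuation = ℓ := by exact_mod_cast hval
  have hne : ϱ ≠ 0 := by
    rintro rfl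
    simp at hv
    omega
  have hdvd : (p : ℤ_[p]) ^ ℓ ∣ ϱ := by
    rw [← hv]
    exact ⟨_, (PadicInt.unitCoeff_spec hne).trans (mul_comm _ _)⟩
  have key : 2 * ℓ ≤ n := by
    by_contra hlt
    push Not at hlt
    have e1 := f.divX_mul_X_add
    have e2 := f.divX.divX_mul_X_add
    rw [← e1, ← e2] at hroot
    simp only [map_add, map_mul, Polynomial.aeval_X, Polynomial.coeff_divX,
      h0, h1, zero_add, map_pow, eq_intCast, Int.cast_natCast, map_natCast, map_intCast] at hroot
    have d1 : (p : ℤ_[p]) ^ (n + 1) ∣ p ^ m * ϱ := by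
      refine (pow_dvd_pow _ (show n + 1 ≤ m + ℓ by omega)).trans ?_
      rw [pow_add]
      exact mul_dvd_mul_left _ hdvd
    have d2 : (p : ℤ_[p]) ^ (n + 1) ∣ ϱ * ϱ := by
      refine (pow_dvd_pow _ (show n + 1 ≤ ℓ + ℓ by omega)).trans ?_
      rw [pow_add]
      exact mul_dvd_mul hdvd hdvd
    have d3 : (p : ℤ_[p]) ^ (n + 1) ∣ p ^ n := by
      obtain ⟨a, ha⟩ := d1
      obtain ⟨b, hb⟩ := d2
      refine ⟨-(a * γ₁ + b * Polynomial.aeval ϱ f.divX.divX), ?_⟩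
      linear_combination hroot - (γ₁ : ℤ_[p]) * ha - Polynomial.aeval ϱ f.divX.divX * hb
    have := (pow_dvd_pow_iff (PadicInt.prime_p (p := p)).ne_zero
      (PadicInt.prime_p (p := p)).not_isUnit).1 d3
    omega
  exact ⟨key, by omega⟩
end

section
/- Let p be a prime and f(x) = p^n + p^m γ₁ x + γ₂ x² + γ₃ x³ a cubic polynomial with integer coefficients, where γ₃ ≠ 0, n ≥ 2, m ≥ 1, either p does not divide γ₁ or γ₁ = 0, and p does not divide both γ₂ and γ₃. Assume n ≤ 2m. If ϱ ∈ ℤ_p is a multiple root of f (i.e., f(ϱ) = 0 and f′(ϱ) = 0), then p divides ϱ, i.e., v_p(ϱ) ≥ 1. -/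
open Polynomial

/-- Let `f = p^n + p^m γ₁ x + γ₂ x² + γ₃ x³` with `γ₃ ≠ 0`, `n ≥ 2`, `m ≥ 1`, `p ∤ γ₁` or
`γ₁ = 0`, `p` not dividing both `γ₂` and `γ₃`, and `n ≤ 2m`.  If `ϱ ∈ ℤ_p` is a multiple root
of `f`, then `p ∣ ϱ`, i.e. `v_p(ϱ) ≥ 1`. -/
theorem cubic_multiple_root_divisible (p : ℕ) [hp : Fact p.Prime]
    (n m : ℕ) (γ₁ γ₂ γ₃ : ℤ) (hγ₃ : γ₃ ≠ 0)
    (hn : 2 ≤ n) (hm : 1 ≤ m)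
    (hγ₁ : ¬ (p : ℤ) ∣ γ₁ ∨ γ₁ = 0)
    (hγ₂₃ : ¬ ((p : ℤ) ∣ γ₂ ∧ (p : ℤ) ∣ γ₃))
    (hnm : n ≤ 2 * m)
    (f : Polynomial ℤ)
    (hf : f = C ((p : ℤ) ^ n) + C ((p : ℤ) ^ m * γ₁) * X + C γ₂ * X ^ 2 + C γ₃ * X ^ 3)
    (ϱ : ℤ_[p]) (hroot : Polynomial.aeval ϱ f = 0)
    (hroot' : Polynomial.aeval ϱ (Polynomial.derivative f) = 0) :
    (p : ℤ_[p]) ∣ ϱ ∧ 1 ≤ ϱ.valuation := by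
  have hpp : Prime (p : ℤ_[p]) := PadicInt.prime_p
  have h1 : (p : ℤ_[p]) ^ n + (p : ℤ_[p]) ^ m * γ₁ * ϱ + γ₂ * ϱ ^ 2 + γ₃ * ϱ ^ 3 = 0 := by
    rw [hf] at hroot
    simpa using hroot
  have h2 : (p : ℤ_[p]) ^ m * γ₁ + γ₂ * (2 * ϱ) + γ₃ * (3 * ϱ ^ 2) = 0 := by
    rw [hf] at hroot'
    have e : ∀ a b c d : ℤ, aeval ϱ (derivative (C a + C b * X + C c * X ^ 2 + C d * X ^ 3))
        = (b : ℤ_[p]) + c * (2 * ϱ) + d * (3 * ϱ ^ 2) := by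
      intro a b c d
      have e2 : derivative (C a + C b * X + C c * X ^ 2 + C d * X ^ 3)
          = C b + C (c * 2) * X + C (d * 3) * X ^ 2 := by
        simp only [derivative_add, derivative_C, derivative_C_mul_X, derivative_C_mul_X_pow]
        norm_num
      rw [e2]
      simp only [map_add, map_mul, map_pow, aeval_X, eq_intCast, map_intCast, map_ofNat]
      push_cast
      ring
    rw [e] at hroot'
    push_cast at hroot'
    exact hroot'
  have hpn : (p : ℤ_[p]) ∣ (p : ℤ_[p]) ^ n := dvd_pow_self _ (by omega)
  have hpm : (p : ℤ_[p]) ∣ (p : ℤ_[p]) ^ m := dvd_pow_self _ (by omega)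
  have key : ∀ z : ℤ, (p : ℤ_[p]) ∣ (z : ℤ_[p]) → (p : ℤ) ∣ z := by
    intro z hz
    have := (PadicInt.norm_int_lt_one_iff_dvd (p := p) z).1
    apply this
    exact (PadicInt.norm_lt_one_iff_dvd _).2 hz
  have hd : (p : ℤ_[p]) ∣ ϱ := by
    by_contra hnd
    apply hγ₂₃
    constructor
    · apply key
      have h : (p : ℤ_[p]) ∣ γ₂ * ϱ ^ 2 := by
        have e : (γ₂ : ℤ_[p]) * ϱ ^ 2
            = (p : ℤ_[p]) ^ n * (-3) + (p : ℤ_[p]) ^ m * (-2 * γ₁ * ϱ) := by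
          linear_combination 3 * h1 - ϱ * h2
        rw [e]
        exact dvd_add (hpn.mul_right _) (hpm.mul_right _)
      exact (hpp.dvd_or_dvd h).resolve_right fun h' => hnd (hpp.dvd_of_dvd_pow h')
    · apply key
      have h : (p : ℤ_[p]) ∣ γ₃ * ϱ ^ 3 := by
        have e : (γ₃ : ℤ_[p]) * ϱ ^ 3
            = (p : ℤ_[p]) ^ n * 2 + (p : ℤ_[p]) ^ m * (γ₁ * ϱ) := by
          linear_combination ϱ * h2 - 2 * h1
        rw [e]
        exact dvd_add (hpn.mul_right _) (hpm.mul_right _)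
      exact (hpp.dvd_or_dvd h).resolve_right fun h' => hnd (hpp.dvd_of_dvd_pow h')
  refine ⟨hd, ?_⟩
  have h0 : ϱ ≠ 0 := by
    rintro rfl
    have : (p : ℤ_[p]) ^ n = 0 := by simpa using h1
    exact pow_ne_zero n hpp.ne_zero this
  have := (PadicInt.mem_span_pow_iff_le_valuation ϱ h0 1).1
  apply this
  rw [pow_one]
  exact Ideal.mem_span_singleton.2 hd
end

section
/- Let p be a prime and f(x) = p^n + p^m γ₁ x + γ₂ x² + γ₃ x³ a cubic polynomial with integer coefficients, where γ₃ ≠ 0, n ≥ 2, m ≥ 1, either p does not divide γ₁ or γ₁ = 0, and p does not divide both γ₂ and γ₃. Assume n ≤ 2m. If f has a multiple root ϱ ∈ ℤ_p (i.e., f(ϱ) = 0 and f′(ϱ) = 0) with v_p(ϱ) = ℓ, then ℓ ≥ 1, ℓ ≤ m, 2ℓ ≤ n, and there exists a nonzero integer a dividing γ₃ such that ϱ = −p^ℓ/a in ℚ_p and f(x) = (p^ℓ + a x)·(p^{n−ℓ} + (p^{m−ℓ} γ₁ − p^{n−2ℓ} a) x + (γ₃/a) x²) as polynomials in ℤ[x];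 in particular this is a proper factorization of f in ℤ[[x]]. -/
open Polynomial

/-- A double root of an integral cubic in a domain of characteristic zero is rational. -/
lemma cubic_aux_rational {R : Type*} [CommRing R] [IsDomain R] [CharZero R]
    (c0 c1 c2 c3 : ℤ) (h3 : c3 ≠ 0) (r : R)
    (h : (c0 : R) + c1 * r + c2 * r ^ 2 + c3 * r ^ 3 = 0)
    (h' : (c1 : R) + 2 * c2 * r + 3 * c3 * r ^ 2 = 0) :
    ∃ A B : ℤ, B ≠ 0 ∧ IsCoprime A B ∧ (B : R) * r = A := by
  have key : ∃ A B : ℤ, B ≠ 0 ∧ (B : R) * r = A := by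
    by_cases hD : 6 * c1 * c3 - 2 * c2 ^ 2 = 0
    · refine ⟨-c2, 3 * c3, by simpa using h3, ?_⟩
      have hD' : (6 * c1 * c3 - 2 * c2 ^ 2 : R) = 0 := by exact_mod_cast hD
      have h2 : (2 : R) ≠ 0 := two_ne_zero
      have : (3 * c3 * r + c2 : R) ^ 2 = 0 := by
        apply mul_left_cancel₀ h2
        linear_combination 6 * (c3 : R) * h' - hD'
      have := pow_eq_zero_iff (two_ne_zero) |>.1 this
      push_cast
      linear_combination this
    · refine ⟨c1 * c2 - 9 * c3 * c0, _, hD, ?_⟩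
      push_cast
      linear_combination (9 * (c3 : R)) * h - (3 * (c3 : R) * r + c2) * h'
  obtain ⟨A, B, hB, hAB⟩ := key
  have hg : (Int.gcd A B : ℤ) ≠ 0 := by
    intro h0
    exact hB (Int.gcd_eq_zero_iff.1 (by exact_mod_cast h0)).2
  obtain ⟨A', hA'⟩ := Int.gcd_dvd_left A B
  obtain ⟨B', hB'⟩ := Int.gcd_dvd_right A B
  refine ⟨A', B', ?_, ?_, ?_⟩
  · rintro rfl
    exact hB (by simpa using hB')
  · refine ⟨Int.gcdA A B, Int.gcdB A B, ?_⟩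
    apply mul_left_cancel₀ hg
    have := Int.gcd_eq_gcd_ab A B
    linear_combination (-Int.gcdA A B) * hA' - Int.gcdB A B * hB' - this
  · have hgR : ((Int.gcd A B : ℤ) : R) ≠ 0 := by exact_mod_cast hg
    apply mul_left_cancel₀ hgR
    have e1 : (A : R) = (Int.gcd A B : ℤ) * A' := by exact_mod_cast hA'
    have e2 : (B : R) = (Int.gcd A B : ℤ) * B' := by exact_mod_cast hB'
    linear_combination hAB + e1 - r * e2

lemma cubic_aux_hom {R : Type*} [CommRing R] [CharZero R]
    (c0 c1 c2 c3 : ℤ) (r : R)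
    (h : (c0 : R) + c1 * r + c2 * r ^ 2 + c3 * r ^ 3 = 0)
    (h' : (c1 : R) + 2 * c2 * r + 3 * c3 * r ^ 2 = 0)
    (A B : ℤ) (hr : (B : R) * r = A) :
    c0 * B ^ 3 + c1 * A * B ^ 2 + c2 * A ^ 2 * B + c3 * A ^ 3 = 0 ∧
    c1 * B ^ 2 + 2 * c2 * A * B + 3 * c3 * A ^ 2 = 0 := by
  constructor
  · have : (c0 * B ^ 3 + c1 * A * B ^ 2 + c2 * A ^ 2 * B + c3 * A ^ 3 : R) = 0 := by
      rw [← hr]; linear_combination (B : R) ^ 3 * h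
    exact_mod_cast this
  · have : (c1 * B ^ 2 + 2 * c2 * A * B + 3 * c3 * A ^ 2 : R) = 0 := by
      rw [← hr]; linear_combination (B : R) ^ 2 * h'
    exact_mod_cast this

lemma cubic_aux_factor (c0 c1 c2 c3 A B : ℤ) (hB : B ≠ 0) (hc : IsCoprime A B)
    (h : c0 * B ^ 3 + c1 * A * B ^ 2 + c2 * A ^ 2 * B + c3 * A ^ 3 = 0)
    (h' : c1 * B ^ 2 + 2 * c2 * A * B + 3 * c3 * A ^ 2 = 0) :
    ∃ s u w : ℤ, c3 = B * (B * u) ∧ c2 = -(B * u * A) + B * s ∧ c1 = -2 * s * A - u * A ^ 2 ∧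
      s + u * A = B * w ∧ c0 = A ^ 2 * w := by
  have d1 : B ∣ c3 := by
    apply (hc.symm.pow_right (n := 3)).dvd_of_dvd_mul_right
    exact ⟨-(c0 * B ^ 2 + c1 * A * B + c2 * A ^ 2), by linear_combination h⟩
  obtain ⟨t, rfl⟩ := d1
  have k1 : c0 * B ^ 2 + c1 * A * B + c2 * A ^ 2 + t * A ^ 3 = 0 := by
    apply mul_left_cancel₀ hB; linear_combination h
  have k2 : c1 * B + 2 * c2 * A + 3 * t * A ^ 2 = 0 := by
    apply mul_left_cancel₀ hB; linear_combination h'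
  have d2 : B ∣ c2 + t * A := by
    apply (hc.symm.pow_right (n := 2)).dvd_of_dvd_mul_right
    exact ⟨-(c0 * B + c1 * A), by linear_combination k1⟩
  obtain ⟨s, hs⟩ := d2
  have d3 : B ∣ t := by
    apply (hc.symm.pow_right (n := 2)).dvd_of_dvd_mul_right
    exact ⟨-(c1 + 2 * s * A), by linear_combination k2 - 2 * A * hs⟩
  obtain ⟨u, rfl⟩ := d3
  have k3 : c1 = -2 * s * A - u * A ^ 2 := by
    apply mul_left_cancel₀ hB; linear_combination k2 - 2 * A * hs
  have k4 : c0 * B = A ^ 2 * (s + u * A) := by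
    apply mul_left_cancel₀ hB; linear_combination k1 - A ^ 2 * hs - A * B * k3
  have d4 : B ∣ s + u * A := by
    apply (hc.symm.pow_right (n := 2)).dvd_of_dvd_mul_left
    exact ⟨c0, by linear_combination -k4⟩
  obtain ⟨w, hw⟩ := d4
  refine ⟨s, u, w, rfl, by linear_combination hs, k3, hw, ?_⟩
  apply mul_left_cancel₀ hB; linear_combination k4 + A ^ 2 * hw

/-- Let `f = p^n + p^m γ₁ x + γ₂ x² + γ₃ x³` with `γ₃ ≠ 0`, `n ≥ 2`, `m ≥ 1`, `p ∤ γ₁` or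
`γ₁ = 0`, `p` not dividing both `γ₂` and `γ₃`, and `n ≤ 2m`.  If `f` has a multiple root
`ϱ ∈ ℤ_p` with `v_p(ϱ) = ℓ`, then `ℓ ≥ 1`, `ℓ ≤ m`, `2ℓ ≤ n`, and there is a nonzero divisor
`a` of `γ₃` with `ϱ = -p^ℓ/a` such that
`f = (p^ℓ + a x) (p^(n-ℓ) + (p^(m-ℓ) γ₁ - p^(n-2ℓ) a) x + (γ₃/a) x²)`, a proper factorization
of `f` in `ℤ[[x]]`. -/
theorem cubic_multiple_root_factorization (p : ℕ) [hp : Fact p.Prime]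
    (n m : ℕ) (γ₁ γ₂ γ₃ : ℤ) (hγ₃ : γ₃ ≠ 0)
    (hn : 2 ≤ n) (hm : 1 ≤ m)
    (hγ₁ : ¬ (p : ℤ) ∣ γ₁ ∨ γ₁ = 0)
    (hγ₂₃ : ¬ ((p : ℤ) ∣ γ₂ ∧ (p : ℤ) ∣ γ₃))
    (hnm : n ≤ 2 * m)
    (f : Polynomial ℤ)
    (hf : f = C ((p : ℤ) ^ n) + C ((p : ℤ) ^ m * γ₁) * X + C γ₂ * X ^ 2 + C γ₃ * X ^ 3)
    (ϱ : ℤ_[p]) (hroot : Polynomial.aeval ϱ f = 0)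
    (hroot' : Polynomial.aeval ϱ (Polynomial.derivative f) = 0)
    (ℓ : ℕ) (hval : ϱ.valuation = (ℓ : ℤ)) :
    1 ≤ ℓ ∧ ℓ ≤ m ∧ 2 * ℓ ≤ n ∧
      ∃ a : ℤ, a ≠ 0 ∧ a ∣ γ₃ ∧
        (ϱ : ℚ_[p]) = -(p : ℚ_[p]) ^ ℓ / (a : ℚ_[p]) ∧
        f = (C ((p : ℤ) ^ ℓ) + C a * X) *
            (C ((p : ℤ) ^ (n - ℓ)) +
              C ((p : ℤ) ^ (m - ℓ) * γ₁ - (p : ℤ) ^ (n - 2 * ℓ) * a) * X +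
              C (γ₃ / a) * X ^ 2) ∧
        ¬ IsUnit ((C ((p : ℤ) ^ ℓ) + C a * X : Polynomial ℤ) : PowerSeries ℤ) ∧
        ¬ IsUnit ((C ((p : ℤ) ^ (n - ℓ)) +
            C ((p : ℤ) ^ (m - ℓ) * γ₁ - (p : ℤ) ^ (n - 2 * ℓ) * a) * X +
            C (γ₃ / a) * X ^ 2 : Polynomial ℤ) : PowerSeries ℤ) := by
  have hpp : p.Prime := hp.out
  have hpZ : Prime (p : ℤ) := Nat.prime_iff_prime_int.1 hpp
  have hp0 : (p : ℤ) ≠ 0 := hpZ.ne_zero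
  have hl : ϱ.valuation = ℓ := by exact_mod_cast hval
  have e1 : (((p : ℤ) ^ n : ℤ) : ℤ_[p]) + ((p : ℤ) ^ m * γ₁ : ℤ) * ϱ + γ₂ * ϱ ^ 2
      + γ₃ * ϱ ^ 3 = 0 := by
    rw [hf] at hroot
    simpa using hroot
  have e2 : (((p : ℤ) ^ m * γ₁ : ℤ) : ℤ_[p]) + 2 * γ₂ * ϱ + 3 * γ₃ * ϱ ^ 2 = 0 := by
    rw [hf] at hroot'
    generalize (p : ℤ) ^ m * γ₁ = c at hroot' ⊢
    generalize (p : ℤ) ^ n = c' at hroot'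
    have hder : derivative (C c' + C c * X + C γ₂ * X ^ 2 + C γ₃ * X ^ 3 : Polynomial ℤ)
        = C c + C (2 * γ₂) * X + C (3 * γ₃) * X ^ 2 := by
      simp only [derivative_add, derivative_C, derivative_C_mul, derivative_X, derivative_X_pow,
        map_mul]
      simp
      ring
    rw [hder] at hroot'
    simp only [map_add, map_mul, map_pow, aeval_C, aeval_X] at hroot'
    simp at hroot'
    linear_combination hroot'
  have hϱ0 : ϱ ≠ 0 := by
    rintro rfl
    have : (p : ℤ_[p]) ^ n = 0 := by simpa using e1
    exact hpp.ne_zero (by exact_mod_cast pow_eq_zero_iff (by omega) |>.1 this)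
  have dvdcast : ∀ z : ℤ, (p : ℤ_[p]) ∣ (z : ℤ_[p]) → (p : ℤ) ∣ z := by
    intro z hz
    have := (PadicInt.norm_int_le_pow_iff_dvd (p := p) (k := z) (n := 1)).1
      (by
        have := (PadicInt.norm_le_pow_iff_mem_span_pow (p := p) (z : ℤ_[p]) 1).2
          (by simpa [Ideal.mem_span_singleton] using hz)
        simpa using this)
    simpa using this
  have hprime : Prime (p : ℤ_[p]) := PadicInt.prime_p
  -- the valuation is positive
  have hl1 : 1 ≤ ℓ := by
    by_contra hcon
    have hv0 : ϱ.valuation = 0 := by omega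
    have hu : ¬ (p : ℤ_[p]) ∣ ϱ := by
      intro hd
      have hU : IsUnit ϱ := by
        rw [PadicInt.isUnit_iff, PadicInt.norm_eq_zpow_neg_valuation hϱ0, hv0]
        simp
      exact hprime.not_isUnit (isUnit_of_dvd_unit hd hU)
    obtain ⟨n', rfl⟩ : ∃ k, n = k + 1 := ⟨n - 1, by omega⟩
    obtain ⟨m', rfl⟩ : ∃ k, m = k + 1 := ⟨m - 1, by omega⟩
    push_cast at e1 e2
    have hd1 : (p : ℤ_[p]) ∣ γ₂ + γ₃ * ϱ := by
      have : (p : ℤ_[p]) ∣ ϱ ^ 2 * (γ₂ + γ₃ * ϱ) :=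
        ⟨-((p : ℤ_[p]) ^ n' + p ^ m' * γ₁ * ϱ), by linear_combination e1⟩
      exact (hprime.dvd_or_dvd this).resolve_left fun h => hu (hprime.dvd_of_dvd_pow h)
    have hd2 : (p : ℤ_[p]) ∣ 2 * γ₂ + 3 * γ₃ * ϱ := by
      have : (p : ℤ_[p]) ∣ ϱ * (2 * γ₂ + 3 * γ₃ * ϱ) :=
        ⟨-((p : ℤ_[p]) ^ m' * γ₁), by linear_combination e2⟩
      exact (hprime.dvd_or_dvd this).resolve_left hu
    have hd3 : (p : ℤ_[p]) ∣ γ₃ := by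
      have : (p : ℤ_[p]) ∣ γ₃ * ϱ := by
        have := dvd_sub hd2 (Dvd.dvd.mul_left hd1 2)
        convert this using 1
        ring
      exact (hprime.dvd_or_dvd this).resolve_right hu
    have hd4 : (p : ℤ_[p]) ∣ γ₂ := (dvd_add_left (Dvd.dvd.mul_right hd3 ϱ)).1 hd1
    exact hγ₂₃ ⟨dvdcast _ hd4, dvdcast _ hd3⟩
  -- rationality
  obtain ⟨A, B, hB, hc, hAB⟩ := cubic_aux_rational _ _ _ _ hγ₃ ϱ e1 e2
  have hAd : A ∣ (p : ℤ) ^ n := by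
    have := (cubic_aux_hom _ _ _ _ ϱ e1 e2 A B hAB).1
    apply (hc.pow_right (n := 3)).dvd_of_dvd_mul_right
    exact ⟨-((p : ℤ) ^ m * γ₁ * B ^ 2 + γ₂ * A * B + γ₃ * A ^ 2), by linear_combination this⟩
  obtain ⟨k, a, ha0, hca, har⟩ : ∃ (k : ℕ) (a : ℤ), a ≠ 0 ∧ IsCoprime (-(p : ℤ) ^ k) a ∧
      (a : ℤ_[p]) * ϱ = (-(p : ℤ) ^ k : ℤ) := by
    obtain ⟨k, -, hk⟩ := (dvd_prime_pow hpZ n).1 hAd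
    rcases Int.associated_iff.1 hk with rfl | rfl
    · exact ⟨k, -B, by simpa using hB, hc.neg_left.neg_right, by push_cast at hAB ⊢; linear_combination -hAB⟩
    · exact ⟨k, B, hB, hc, hAB⟩
  have hpa : k ≠ 0 → ¬ (p : ℤ) ∣ a := by
    intro hk hd
    exact hpZ.not_isUnit (hca.isUnit_of_dvd' ((dvd_pow_self _ hk).neg_right) hd)
  have haR : (a : ℤ_[p]) ≠ 0 := by exact_mod_cast ha0
  have hvk : (a : ℤ_[p]).valuation + ℓ = k := by
    rw [← hl, ← PadicInt.valuation_mul haR hϱ0, har]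
    push_cast
    have : (-(p : ℤ_[p]) ^ k) = (p : ℤ_[p]) ^ k * (-1) := by ring
    rw [this, PadicInt.valuation_p_pow_mul _ _ (by simp)]
    have h1 : (-1 : ℤ_[p]).valuation = 0 := by
      have h2 := PadicInt.valuation_mul (p := p) (x := -1) (y := -1) (by simp) (by simp)
      simp at h2
      omega
    omega
  have hva : (a : ℤ_[p]).valuation = 0 := by
    by_contra hne
    apply hpa (by omega)
    apply dvdcast
    have := (PadicInt.mem_span_pow_iff_le_valuation (a : ℤ_[p]) haR 1).2 (by omega)
    simpa [Ideal.mem_span_singleton] using this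
  obtain rfl : k = ℓ := by omega
  obtain ⟨h1, h2⟩ := cubic_aux_hom _ _ _ _ ϱ e1 e2 _ a har
  obtain ⟨s, u, w, f3, f2, f1, fw, f0⟩ := cubic_aux_factor _ _ _ _ _ a ha0 hca h1 h2
  have h2k : 2 * k ≤ n := by
    have : (p : ℤ) ^ (2 * k) ∣ (p : ℤ) ^ n := ⟨w, by rw [f0]; ring⟩
    exact (pow_dvd_pow_iff hp0 hpZ.not_isUnit).1 this
  have hkm : k ≤ m := by omega
  have hPk : (p : ℤ) ^ k ≠ 0 := pow_ne_zero _ hp0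
  have hw : w = (p : ℤ) ^ (n - 2 * k) := by
    apply mul_left_cancel₀ (pow_ne_zero 2 hPk)
    have : (p : ℤ) ^ n = ((p : ℤ) ^ k) ^ 2 * (p : ℤ) ^ (n - 2 * k) := by
      rw [← pow_mul, ← pow_add]; congr 1; omega
    linear_combination this - f0
  have hm1 : (p : ℤ) ^ m = (p : ℤ) ^ k * (p : ℤ) ^ (m - k) := by
    rw [← pow_add]; congr 1; omega
  have hn1 : (p : ℤ) ^ n = (p : ℤ) ^ k * (p : ℤ) ^ (n - k) := by
    rw [← pow_add]; congr 1; omega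
  have hn2 : (p : ℤ) ^ (n - k) = (p : ℤ) ^ k * (p : ℤ) ^ (n - 2 * k) := by
    rw [← pow_add]; congr 1; omega
  have hd : (p : ℤ) ^ (m - k) * γ₁ = 2 * s - u * (p : ℤ) ^ k := by
    apply mul_left_cancel₀ hPk
    linear_combination f1 - γ₁ * hm1
  have hq : γ₃ / a = a * u := by
    rw [f3]; exact Int.mul_ediv_cancel_left _ ha0
  have hnu : ∀ j : ℕ, 1 ≤ j → ¬ IsUnit ((p : ℤ) ^ j) := by
    intro j hj h
    exact hpZ.not_isUnit ((isUnit_pow_iff (by omega)).1 h)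
  refine ⟨hl1, hkm, h2k, a, ha0, ⟨_, f3⟩, ?_, ?_, ?_, ?_⟩
  · have haQ : (a : ℚ_[p]) ≠ 0 := by exact_mod_cast ha0
    rw [eq_div_iff haQ]
    have := congrArg (fun z : ℤ_[p] => (z : ℚ_[p])) har
    push_cast at this
    linear_combination this
  · have g1 : (p : ℤ) ^ m * γ₁ = (p : ℤ) ^ k *
        ((p : ℤ) ^ (m - k) * γ₁ - (p : ℤ) ^ (n - 2 * k) * a) + a * (p : ℤ) ^ (n - k) := by
      linear_combination γ₁ * hm1 - a * hn2
    have g2 : γ₂ = (p : ℤ) ^ k * (γ₃ / a) +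
        a * ((p : ℤ) ^ (m - k) * γ₁ - (p : ℤ) ^ (n - 2 * k) * a) := by
      rw [hq, hd, ← hw]
      linear_combination f2 - a * fw
    have g3 : γ₃ = a * (γ₃ / a) := by rw [hq]; exact f3
    generalize (p : ℤ) ^ (m - k) * γ₁ - (p : ℤ) ^ (n - 2 * k) * a = G at g1 g2 ⊢
    generalize γ₃ / a = Q at g2 g3 ⊢
    rw [hf, g1, g2, g3, hn1]
    simp only [map_add, map_mul]
    ring
  · intro h
    have := PowerSeries.isUnit_constantCoeff _ h
    simp at this
    apply hnu k hl1
    simpa using this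
  · intro h
    have := PowerSeries.isUnit_constantCoeff _ h
    apply hnu (n - k) (by omega)
    simpa using this
end

section
/- Let p be a prime, n ≥ 2 an integer, and γ₁, γ₂ ∈ ℤ with p not dividing γ₁ and γ₂ ≠ 0. Then the quadratic polynomial f(x) = p^n + γ₁ x + γ₂ x² has a root in ℤ_p, and f is reducible in ℤ_p[x], i.e., f = g·h for polynomials g, h over ℤ_p neither of which is a unit of ℤ_p[x]. (Note that, in contrast, such f is irreducible in ℤ[[x]].) -/
open Polynomial

/-- Let `p` be a prime, `n ≥ 2`, `p ∤ γ₁`, and `γ₂ ≠ 0`.  Then `f = p^n + γ₁ x + γ₂ x²` has a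
root in `ℤ_p` and is reducible in `ℤ_p[x]`. -/
theorem quadratic_reducible_in_padic (p : ℕ) [hp : Fact p.Prime]
    (n : ℕ) (hn : 2 ≤ n) (γ₁ γ₂ : ℤ) (hγ₁ : ¬ (p : ℤ) ∣ γ₁) (hγ₂ : γ₂ ≠ 0)
    (f : Polynomial ℤ)
    (hf : f = C ((p : ℤ) ^ n) + C γ₁ * X + C γ₂ * X ^ 2) :
    (∃ ϱ : ℤ_[p], Polynomial.aeval ϱ f = 0) ∧
      ∃ g h : Polynomial ℤ_[p],
        f.map (Int.castRingHom ℤ_[p]) = g * h ∧ ¬ IsUnit g ∧ ¬ IsUnit h := by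
  have h1 : ‖(γ₁ : ℤ_[p])‖ = 1 := by
    refine le_antisymm (PadicInt.norm_le_one _) ?_
    rw [← not_lt, PadicInt.norm_int_lt_one_iff_dvd]
    exact hγ₁
  have h0 : aeval (0 : ℤ_[p]) f = (p : ℤ_[p]) ^ n := by
    rw [hf]; simp
  have hd : aeval (0 : ℤ_[p]) (derivative f) = (γ₁ : ℤ_[p]) := by
    rw [hf, derivative_add, derivative_add, derivative_C]; simp
  have hp1 : ‖(p : ℤ_[p]) ^ n‖ < 1 := by
    rw [norm_pow]
    exact pow_lt_one₀ (norm_nonneg _) (PadicInt.not_isUnit_iff.1 PadicInt.p_nonunit) (by omega)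
  obtain ⟨r, hr, -⟩ := hensels_lemma (p := p) (F := f) (a := (0 : ℤ_[p]))
    (by rw [h0, hd, h1]; simpa using hp1)
  refine ⟨⟨r, hr⟩, X - C r, C (γ₂ : ℤ_[p]) * X + C ((γ₁ : ℤ_[p]) + γ₂ * r), ?_, ?_, ?_⟩
  · have hr' : (p : ℤ_[p]) ^ n + γ₁ * r + γ₂ * r ^ 2 = 0 := by
      rw [hf] at hr; simpa using hr
    have hc : (p : ℤ_[p]) ^ n = -(γ₁ * r + γ₂ * r ^ 2) := by linear_combination hr'
    have hm : f.map (Int.castRingHom ℤ_[p]) =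
        C ((p : ℤ_[p]) ^ n) + C (γ₁ : ℤ_[p]) * X + C (γ₂ : ℤ_[p]) * X ^ 2 := by
      rw [hf]; simp
    rw [hm, hc]
    simp only [C_neg, C_add, C_mul, C_pow]
    ring
  · exact not_isUnit_X_sub_C r
  · intro hu
    have := natDegree_eq_zero_of_isUnit hu
    rw [natDegree_linear (by exact_mod_cast hγ₂)] at this
    exact one_ne_zero this
end
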